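/- Let K be a nonempty compact topological space and let p > 1 be a real number. For any continuous functions u, φ : K → ℝ, the one-sided limit lim_{ε→0⁺} (‖u + εφ‖_∞^p − ‖u‖_∞^p)/ε exists and equals p · max{ |u(x)|^{p−2}u(x)·φ(x) : x ∈ K, |u(x)| = ‖u‖_∞ }. -/

import Mathlib

open Filter Set
noncomputable section

/-!
Since `t ↦ t ^ p` is increasing on `[0, ∞)`, `‖u + εφ‖ ^ p` is the maximum over `x` of
`|u x + ε φ x| ^ p`, a family of functions of `ε` that are `C¹` because `1 < p`. Danskin's theorem
then applies: the right derivative of a maximum over a compact space is the largest derivative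
among the maximizers. Comparing with a fixed maximizer at `0` bounds the slope from below. For the
upper bound the slope is compared with that of a maximizer at `ε`; compactness forces such points
to be close to maximizers at `0`.
-/

theorem slope_le_slope_of_le {𝕜 : Type*} [Field 𝕜] [LinearOrder 𝕜] [IsStrictOrderedRing 𝕜]
    {f g : 𝕜 → 𝕜} {a b : 𝕜} (hab : a < b) (ha : g a ≤ f a) (hb : f b ≤ g b) :
    slope f a b ≤ slope g a b := by
  rw [slope_def_field, slope_def_field]
  exact div_le_div_of_nonneg_right (sub_le_sub hb ha) (sub_pos.2 hab).le

section Danskin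

variable {X : Type*} {t₀ : ℝ}

theorem tendsto_slope_of_tendsto_deriv {f f' : ℝ → X → ℝ} {l : Filter X} {c : ℝ}
    (hf : ∀ t x, HasDerivAt (fun s => f s x) (f' t x) t)
    (hf' : Tendsto (fun q : ℝ × X => f' q.1 q.2) (nhds t₀ ×ˢ l) (nhds c)) :
    Tendsto (fun q : ℝ × X => slope (fun s => f s q.2) t₀ q.1)
      (nhdsWithin t₀ (Ioi t₀) ×ˢ l) (nhds c) := by
  have mean_value (q : ℝ × X) (hq : t₀ < q.1) :
      ∃ s ∈ Ioo t₀ q.1, f' s q.2 = slope (fun s => f s q.2) t₀ q.1 := by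
    simpa only [slope_def_field] using exists_hasDerivAt_eq_slope (fun s => f s q.2)
      (fun s => f' s q.2) hq (HasDerivAt.continuousOn fun s _ => hf s q.2) fun s _ => hf s q.2
  choose! ξ hξ hslope using mean_value
  have hfst : Tendsto Prod.fst (nhdsWithin t₀ (Ioi t₀) ×ˢ l) (nhdsWithin t₀ (Ioi t₀)) :=
    tendsto_fst
  have hright : ∀ᶠ q : ℝ × X in nhdsWithin t₀ (Ioi t₀) ×ˢ l, t₀ < q.1 :=
    hfst.eventually self_mem_nhdsWithin
  have hξ_tendsto : Tendsto ξ (nhdsWithin t₀ (Ioi t₀) ×ˢ l) (nhds t₀) :=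
    tendsto_of_tendsto_of_tendsto_of_le_of_le' tendsto_const_nhds
      (hfst.mono_right nhdsWithin_le_nhds) (hright.mono fun q hq => (hξ q hq).1.le)
      (hright.mono fun q hq => (hξ q hq).2.le)
  exact (hf'.comp (hξ_tendsto.prodMk tendsto_snd)).congr' (hright.mono hslope)

variable [TopologicalSpace X] {f : ℝ → X → ℝ} {D : X → ℝ}

theorem eventually_forall_slope_lt_of_forall_le [CompactSpace X] {M b : ℝ}
    (hf : ∀ x, ContinuousAt (fun q : ℝ × X => f q.1 q.2) (t₀, x))
    (hslope : ∀ x, f t₀ x = M → Tendsto (fun q : ℝ × X => slope (fun s => f s q.2) t₀ q.1)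
      (nhdsWithin t₀ (Ioi t₀) ×ˢ nhds x) (nhds (D x)))
    (hM : IsGreatest (range (f t₀)) M) (hb : ∀ x, f t₀ x = M → D x < b) :
    ∀ᶠ t in nhdsWithin t₀ (Ioi t₀),
      ∀ x, (∀ y, f t y ≤ f t x) → slope (fun s => f s x) t₀ t < b := by
  obtain ⟨z, hz⟩ := hM.1
  have hlocal (x : X) : ∀ᶠ q : ℝ × X in nhdsWithin t₀ (Ioi t₀) ×ˢ nhds x,
      (∀ y, f q.1 y ≤ f q.1 q.2) → slope (fun s => f s q.2) t₀ q.1 < b := by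
    rcases (hM.2 (mem_range_self x)).eq_or_lt with hmax | hlt
    · filter_upwards [(hslope x hmax).eventually_lt_const (hb x hmax)] with q hq _ using hq
    · have hbelow : ∀ᶠ q : ℝ × X in nhds (t₀, x), f q.1 q.2 < f q.1 z :=
        (hf x).eventually_lt
          ((hf z).comp (f := fun q : ℝ × X => (q.1, z)) (x := (t₀, x)) (by fun_prop))
          (hlt.trans_eq hz.symm)
      rw [nhds_prod_eq] at hbelow
      filter_upwards [prod_mono_left _ nhdsWithin_le_nhds hbelow] with q hq hqmax
      exact absurd (hqmax z) hq.not_ge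
  have hcompact := isCompact_univ.mem_prod_nhdsSet_of_forall fun x _ => hlocal x
  exact (Eventually.curry hcompact).mono fun t ht x => ht.self_of_nhdsSet x (mem_univ x)

theorem hasDerivWithinAt_Ioi_of_isGreatest_range [CompactSpace X] {m : ℝ → ℝ} {d : ℝ}
    (hf : ∀ x, ContinuousAt (fun q : ℝ × X => f q.1 q.2) (t₀, x))
    (hslope : ∀ x, f t₀ x = m t₀ → Tendsto (fun q : ℝ × X => slope (fun s => f s q.2) t₀ q.1)
      (nhdsWithin t₀ (Ioi t₀) ×ˢ nhds x) (nhds (D x)))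
    (hm : ∀ t, IsGreatest (range (f t)) (m t))
    (hd : IsGreatest (D '' {x | f t₀ x = m t₀}) d) :
    HasDerivWithinAt m d (Ioi t₀) t₀ := by
  rw [hasDerivWithinAt_iff_tendsto_slope' self_notMem_Ioi]
  refine tendsto_order.2 ⟨fun a ha => ?_, fun b hb => ?_⟩
  · obtain ⟨⟨z, hz, rfl⟩, -⟩ := hd
    have hslope_z : Tendsto (slope (fun s => f s z) t₀) (nhdsWithin t₀ (Ioi t₀)) (nhds (D z)) :=
      (hslope z hz).comp (tendsto_id.prodMk tendsto_const_nhds)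
    filter_upwards [self_mem_nhdsWithin, hslope_z.eventually_const_lt ha] with t ht hlt
    exact hlt.trans_le (slope_le_slope_of_le ht hz.ge ((hm t).2 (mem_range_self z)))
  · have hD (x : X) (hx : f t₀ x = m t₀) : D x < b := (hd.2 (mem_image_of_mem D hx)).trans_lt hb
    filter_upwards [self_mem_nhdsWithin,
      eventually_forall_slope_lt_of_forall_le hf hslope (hm t₀) hD] with t ht hlt
    obtain ⟨x, hx⟩ := (hm t).1
    have hxmax (y : X) : f t y ≤ f t x := hx ▸ (hm t).2 (mem_range_self y)
    exact (slope_le_slope_of_le ht ((hm t₀).2 (mem_range_self x)) hx.ge).trans_lt (hlt x hxmax)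

end Danskin

theorem continuous_abs_rpow_sub_two_mul {p : ℝ} (hp : 1 < p) :
    Continuous fun t : ℝ => |t| ^ (p - 2) * t := by
  have hderiv : deriv (fun t : ℝ => |t| ^ p) = fun t => p * |t| ^ (p - 2) * t :=
    funext fun t => (hasDerivAt_abs_rpow t hp).deriv
  have hcont : Continuous fun t : ℝ => p * |t| ^ (p - 2) * t :=
    hderiv ▸ (contDiff_norm_rpow (E := ℝ) hp).continuous_deriv le_rfl
  have hp0 : p ≠ 0 := by positivity
  refine (hcont.const_mul p⁻¹).congr fun t => ?_
  field_simp

theorem hasDerivAt_abs_add_mul_rpow {p : ℝ} (hp : 1 < p) (a b t : ℝ) :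
    HasDerivAt (fun s => |a + s * b| ^ p) (p * (|a + t * b| ^ (p - 2) * (a + t * b) * b)) t := by
  have hline : HasDerivAt (fun s => a + s * b) b t := by
    simpa using ((hasDerivAt_id t).mul_const b).const_add a
  exact ((hasDerivAt_abs_rpow _ hp).comp t hline).congr_deriv (by ring)

section CompactSpace

variable {K : Type*} [TopologicalSpace K] [CompactSpace K] [Nonempty K]

variable {α β : Type*} [ConditionallyCompleteLinearOrder α] [TopologicalSpace α]
  [OrderTopology α] [ConditionallyCompleteLinearOrder β] [TopologicalSpace β] [OrderTopology β]

theorem isGreatest_range_sSup {g : K → α} (hg : Continuous g) :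
    IsGreatest (range g) (sSup (range g)) :=
  (isCompact_range hg).isGreatest_sSup (range_nonempty g)

theorem isGreatest_range_abs_rpow {g : K → ℝ} (hg : Continuous g) {p : ℝ} (hp : 0 ≤ p) :
    IsGreatest (range fun x => |g x| ^ p) (sSup (range fun x => |g x|) ^ p) := by
  have hmono : MonotoneOn (fun t : ℝ => t ^ p) (range fun x => |g x|) :=
    (Real.monotoneOn_rpow_Ici_of_exponent_nonneg hp).mono
      (range_subset_iff.2 fun x => abs_nonneg (g x))
  simpa only [← range_comp, Function.comp_def] using
    hmono.map_isGreatest (isGreatest_range_sSup hg.abs)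

theorem isGreatest_image_setOf_eq_sSup_range {g : K → α} {h : K → β}
    (hg : Continuous g) (hh : Continuous h) :
    IsGreatest (h '' {x | g x = sSup (range g)}) (sSup (h '' {x | g x = sSup (range g)})) :=
  ((isClosed_eq hg continuous_const).isCompact.image hh).isGreatest_sSup
    (Nonempty.image h (isGreatest_range_sSup hg).1)

theorem isGreatest_image_setOf_abs_rpow_eq {u φ : K → ℝ} (hu : Continuous u) (hφ : Continuous φ)
    {p : ℝ} (hp : 1 < p) :
    IsGreatest
      ((fun x => p * (|u x| ^ (p - 2) * u x * φ x)) ''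
        {x | |u x| ^ p = sSup (range fun x => |u x|) ^ p})
      (p * sSup ((fun x => |u x| ^ (p - 2) * u x * φ x) ''
        {x | |u x| = sSup (range fun x => |u x|)})) := by
  have hp0 : 0 < p := by positivity
  have hnorm : 0 ≤ sSup (range fun x => |u x|) :=
    Real.sSup_nonneg (forall_mem_range.2 fun x => abs_nonneg (u x))
  have hvalue : Continuous fun x => |u x| ^ (p - 2) * u x * φ x :=
    ((continuous_abs_rpow_sub_two_mul hp).comp hu).mul hφ
  have hmax := isGreatest_image_setOf_eq_sSup_range hu.abs hvalue
  simp only [Real.rpow_left_inj (abs_nonneg _) hnorm hp0.ne']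
  simpa only [image_image] using (monotone_mul_left_of_nonneg hp0.le).map_isGreatest hmax

theorem hasDerivWithinAt_sSup_abs_add_mul_rpow {u φ : K → ℝ} (hu : Continuous u)
    (hφ : Continuous φ) {p : ℝ} (hp : 1 < p) :
    HasDerivWithinAt (fun ε => sSup (range fun x => |u x + ε * φ x|) ^ p)
      (p * sSup ((fun x => |u x| ^ (p - 2) * u x * φ x) ''
        {x | |u x| = sSup (range fun x => |u x|)})) (Ioi 0) 0 := by
  have hp0 : 0 ≤ p := by positivity
  have hline : Continuous fun q : ℝ × K => u q.2 + q.1 * φ q.2 := by fun_prop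
  have hf : Continuous fun q : ℝ × K => |u q.2 + q.1 * φ q.2| ^ p :=
    hline.abs.rpow_const fun _ => Or.inr hp0
  have hf' : Continuous fun q : ℝ × K =>
      p * (|u q.2 + q.1 * φ q.2| ^ (p - 2) * (u q.2 + q.1 * φ q.2) * φ q.2) :=
    (((continuous_abs_rpow_sub_two_mul hp).comp hline).mul (hφ.comp continuous_snd)).const_mul p
  refine hasDerivWithinAt_Ioi_of_isGreatest_range (f := fun ε x => |u x + ε * φ x| ^ p)
    (fun x => hf.continuousAt) (fun x _ => ?_)
    (fun ε => isGreatest_range_abs_rpow (hu.add (hφ.const_mul ε)) hp0) ?_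
    (D := fun x => p * (|u x| ^ (p - 2) * u x * φ x))
  · refine tendsto_slope_of_tendsto_deriv
      (fun ε x => hasDerivAt_abs_add_mul_rpow hp (u x) (φ x) ε) ?_
    rw [← nhds_prod_eq]
    exact hf'.tendsto' (0, x) _ (by simp only [zero_mul, add_zero])
  · simpa only [zero_mul, add_zero] using isGreatest_image_setOf_abs_rpow_eq hu hφ hp

end CompactSpace

/-- One-sided derivative of the `p`-th power of the sup norm: for continuous `u, φ` on a
nonempty compact space `K`,
`lim_{ε→0⁺} (‖u+εφ‖_∞^p − ‖u‖_∞^p)/ε = p·max{|u x|^{p-2} u x · φ x : |u x| = ‖u‖_∞}`. -/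
theorem supnorm_pow_one_sided_deriv {K : Type*} [TopologicalSpace K] [CompactSpace K]
    [Nonempty K] (p : ℝ) (hp : 1 < p)
    (u φ : K → ℝ) (hu : Continuous u) (hφ : Continuous φ) :
    Tendsto
      (fun ε : ℝ =>
        ((sSup (range fun x => |u x + ε * φ x|)) ^ p
          - (sSup (range fun x => |u x|)) ^ p) / ε)
      (nhdsWithin 0 (Ioi 0))
      (nhds (p * sSup { v : ℝ | ∃ x : K, |u x| = sSup (range fun y => |u y|) ∧
        v = |u x| ^ (p - 2) * u x * φ x })) := by
  have hvalues : {v : ℝ | ∃ x : K, |u x| = sSup (range fun y => |u y|) ∧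
      v = |u x| ^ (p - 2) * u x * φ x} =
      (fun x => |u x| ^ (p - 2) * u x * φ x) '' {x | |u x| = sSup (range fun y => |u y|)} := by
    ext v
    simp only [mem_ofPred_eq, mem_image, eq_comm (a := v)]
  have hderiv := hasDerivWithinAt_sSup_abs_add_mul_rpow hu hφ hp
  rw [hasDerivWithinAt_iff_tendsto_slope' self_notMem_Ioi] at hderiv
  rw [hvalues]
  simpa only [slope_fun_def_field, zero_mul, add_zero, sub_zero] using hderiv
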